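/- Fix an integer n ≥ 1 and a real ε > 0, and define F : (0,∞) → ℂ by F(𝗊) = (1/(2π)) ∫_{−∞}^{∞} Γ(ε+is)^n · exp(−(ε+is)·log 𝗊) ds. Then F(𝗊) · (n−1)! / (log(1/𝗊))^{n−1} → 1 as 𝗊 → 0⁺; that is, F(𝗊) is asymptotic to (−log 𝗊)^{n−1}/(n−1)! as 𝗊 tends to 0 from above. -/

import Mathlib

/-!
For `𝗊 < 1` put `L = log (1 / 𝗊) > 0`. The integrand `Γ(λ)ⁿ 𝗊^{-λ} = Γ(λ)ⁿ e^{Lλ}` is holomorphic on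
`Re λ > 0` and decays like `1 / (1 + (Im λ)²)` on closed vertical strips there (shift the argument
of `Γ` by two with the functional equation, then use `|Γ(z)| ≤ Γ(Re z)`). By Cauchy's theorem the
line of integration may be moved from `Re λ = ε` to `Re λ = 1 / L`. Substituting `λ = (1 + iu) / L`
and `Γ(λ) = Γ(1 + λ) / λ` gives
`∫ Γ(λ)ⁿ e^{Lλ} ds = L^{n-1} ∫ Γ(1 + (1 + iu) / L)ⁿ e^{1 + iu} / (1 + iu)ⁿ du`.

For `n ≥ 2` the right-hand integrand is dominated by `e / (1 + u²)` once `L ≥ 1`, since `Γ ≤ 1` on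
`[1, 2]` by convexity. Hence the integral tends to `∫ e^{1 + iu} / (1 + iu)ⁿ du = 2π / (n - 1)!`, the
value given by Fourier inversion of `t^{n-1} e^{-t}` on `t > 0`, evaluated at `t = 1`.

For `n = 1` the limiting integral does not converge absolutely; instead Mellin inversion gives
`F(𝗊) = e^{-𝗊}` directly.
-/

open MeasureTheory Real Filter

open scoped FourierTransform Topology

namespace QuantumVolume

/-! ### Bounds for the Gamma function on vertical strips -/

theorem norm_Gamma_le {z : ℂ} (hz : 0 < z.re) : ‖Complex.Gamma z‖ ≤ Real.Gamma z.re := by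
  rw [Complex.Gamma_eq_integral hz, Real.Gamma_eq_integral hz, Complex.GammaIntegral]
  refine (norm_integral_le_integral_norm _).trans_eq ?_
  refine setIntegral_congr_fun measurableSet_Ioi fun x hx => ?_
  have hx' : (0 : ℝ) < x := hx
  simp only [norm_mul, Complex.norm_real, Real.norm_eq_abs, abs_exp]
  rw [Complex.norm_cpow_eq_rpow_re_of_pos hx']
  simp

theorem Gamma_le_one {x : ℝ} (h1 : 1 ≤ x) (h2 : x ≤ 2) : Real.Gamma x ≤ 1 := by
  have h := Real.convexOn_Gamma.le_max_of_mem_Icc (x := 1) (y := 2) (z := x)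
    (by simp) (by simp) ⟨h1, h2⟩
  simpa [Real.Gamma_two] using h

theorem differentiableAt_Gamma {z : ℂ} (hz : 0 < z.re) : DifferentiableAt ℂ Complex.Gamma z := by
  refine Complex.differentiableAt_Gamma z fun m hm => ?_
  rw [hm] at hz
  simp only [Complex.neg_re, Complex.natCast_re] at hz
  have : (0 : ℝ) ≤ m := m.cast_nonneg
  linarith

/-- Uniform quadratic decay of `Γ` on a vertical strip, from `Γ(z + 2) = (z + 1) z Γ(z)`. -/
theorem exists_norm_Gamma_le {a b : ℝ} (ha : 0 < a) :
    ∃ M : ℝ, 0 ≤ M ∧ ∀ x ∈ Set.Icc a b, ∀ y : ℝ,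
      ‖Complex.Gamma ((x : ℂ) + (y : ℂ) * Complex.I)‖ ≤ M * (1 + y ^ 2)⁻¹ := by
  have hc : ContinuousOn (fun x => Real.Gamma (x + 2)) (Set.Icc a b) := by
    intro x hx
    have hx0 : 0 < x := ha.trans_le hx.1
    refine ContinuousAt.continuousWithinAt ?_
    refine ContinuousAt.comp (g := Real.Gamma) (f := fun x : ℝ => x + 2) ?_
      (continuous_add_const 2).continuousAt
    refine (Real.differentiableAt_Gamma fun m hm => ?_).continuousAt
    have : (0 : ℝ) ≤ m := m.cast_nonneg
    linarith
  obtain ⟨C, hC⟩ := isCompact_Icc.exists_bound_of_continuousOn hc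
  -- `c` makes `c (1 + y²) ≤ x² + y²` for every `x ≥ a`.
  set c := min (a ^ 2) 1 with hcdef
  have hc0 : 0 < c := lt_min (by positivity) one_pos
  refine ⟨|C| / c, by positivity, fun x hx y => ?_⟩
  have hx0 : 0 < x := ha.trans_le hx.1
  set z : ℂ := (x : ℂ) + (y : ℂ) * Complex.I with hz
  have hzre : z.re = x := by simp [hz]
  have hzim : z.im = y := by simp [hz]
  have hz0 : z ≠ 0 := fun h => by rw [h] at hzre; simp at hzre; linarith
  have hz1 : z + 1 ≠ 0 := fun h => by
    have := congrArg Complex.re h; simp [hzre] at this; linarith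
  have hrec : Complex.Gamma (z + 2) = (z + 1) * (z * Complex.Gamma z) := by
    rw [← Complex.Gamma_add_one z hz0, ← Complex.Gamma_add_one (z + 1) hz1]
    congr 1; ring
  have hG : ‖Complex.Gamma (z + 2)‖ ≤ |C| := by
    refine (norm_Gamma_le (by simp [hzre]; linarith)).trans ?_
    have h := hC x hx
    have : (z + 2).re = x + 2 := by simp [hzre]
    rw [this]
    exact (le_abs_self _).trans (h.trans (le_abs_self C))
  have hn1 : ‖z‖ ≤ ‖z + 1‖ := by
    rw [Complex.norm_def, Complex.norm_def]
    refine Real.sqrt_le_sqrt ?_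
    rw [Complex.normSq_apply, Complex.normSq_apply]
    simp only [Complex.add_re, Complex.add_im, Complex.one_re, Complex.one_im, hzre, hzim]
    nlinarith
  have hn2 : c * (1 + y ^ 2) ≤ ‖z‖ ^ 2 := by
    rw [← Complex.normSq_eq_norm_sq, Complex.normSq_apply, hzre, hzim]
    have h1 : c ≤ a ^ 2 := min_le_left _ _
    have h2 : c ≤ 1 := min_le_right _ _
    have h3 : a ^ 2 ≤ x ^ 2 := pow_le_pow_left₀ ha.le hx.1 2
    nlinarith [sq_nonneg y]
  have key : c * (1 + y ^ 2) * ‖Complex.Gamma z‖ ≤ |C| := by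
    calc c * (1 + y ^ 2) * ‖Complex.Gamma z‖ ≤ (‖z + 1‖ * ‖z‖) * ‖Complex.Gamma z‖ := by
          refine mul_le_mul_of_nonneg_right ?_ (norm_nonneg _)
          exact hn2.trans (by rw [sq]; gcongr)
      _ = ‖Complex.Gamma (z + 2)‖ := by rw [hrec, norm_mul, norm_mul]; ring
      _ ≤ |C| := hG
  rw [← div_eq_mul_inv, div_div, le_div_iff₀ (by positivity)]
  linarith

/-! ### Contour shift and rescaling -/

/-- Moving a vertical line of integration from `Re z = a` to `Re z = b`: the horizontal sides of
the rectangle of height `2T` contribute at most a multiple of `1 / (1 + T²)`. -/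
theorem integral_vertical_eq {f : ℂ → ℂ} {a b : ℝ} (hab : a ≤ b)
    (hd : ∀ z : ℂ, a ≤ z.re → DifferentiableAt ℂ f z) {M : ℝ}
    (hM : ∀ x ∈ Set.Icc a b, ∀ y : ℝ,
      ‖f ((x : ℂ) + (y : ℂ) * Complex.I)‖ ≤ M * (1 + y ^ 2)⁻¹) :
    ∫ y : ℝ, f ((a : ℂ) + (y : ℂ) * Complex.I) = ∫ y : ℝ, f ((b : ℂ) + (y : ℂ) * Complex.I) := by
  have hint : ∀ x ∈ Set.Icc a b, Integrable fun y : ℝ => f ((x : ℂ) + (y : ℂ) * Complex.I) := by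
    intro x hx
    refine (integrable_inv_one_add_sq.const_mul M).mono' ?_ (.of_forall (hM x hx))
    refine Continuous.aestronglyMeasurable (continuous_iff_continuousAt.2 fun y => ?_)
    refine ContinuousAt.comp (f := fun y : ℝ => (x : ℂ) + (y : ℂ) * Complex.I) ?_ (by fun_prop)
    exact (hd _ (by simpa using hx.1)).continuousAt
  have hlim : ∀ x ∈ Set.Icc a b,
      Tendsto (fun T : ℝ => ∫ y in (-T)..T, f ((x : ℂ) + (y : ℂ) * Complex.I)) atTop
        (𝓝 (∫ y : ℝ, f ((x : ℂ) + (y : ℂ) * Complex.I))) := fun x hx =>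
    intervalIntegral_tendsto_integral (hint x hx) tendsto_neg_atTop_atBot tendsto_id
  have hM0 : Tendsto (fun T : ℝ => M * (1 + T ^ 2)⁻¹ * |b - a|) atTop (𝓝 0) := by
    have h1 : Tendsto (fun T : ℝ => (1 + T ^ 2)⁻¹) atTop (𝓝 0) :=
      (tendsto_atTop_add_const_left _ _ (tendsto_pow_atTop two_ne_zero)).inv_tendsto_atTop
    simpa using (h1.const_mul M).mul_const |b - a|
  -- `σ = 1` and `σ = -1` are the top and bottom sides of the rectangle.
  have hhor : ∀ σ : ℝ, σ ^ 2 = 1 → Tendsto (fun T : ℝ =>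
      ∫ x in a..b, f ((x : ℂ) + ((σ * T : ℝ) : ℂ) * Complex.I)) atTop (𝓝 0) := by
    intro σ hσ
    refine squeeze_zero_norm (fun T => ?_) hM0
    refine intervalIntegral.norm_integral_le_of_norm_le_const fun x hx => ?_
    rw [Set.uIoc_of_le hab] at hx
    have := hM x ⟨hx.1.le, hx.2⟩ (σ * T)
    rwa [mul_pow, hσ, one_mul] at this
  have hrect : ∀ T : ℝ,
      (∫ x in a..b, f ((x : ℂ) + ((-1 * T : ℝ) : ℂ) * Complex.I)) -
        (∫ x in a..b, f ((x : ℂ) + ((1 * T : ℝ) : ℂ) * Complex.I)) +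
        Complex.I * (∫ y in (-T)..T, f ((b : ℂ) + (y : ℂ) * Complex.I)) -
        Complex.I * (∫ y in (-T)..T, f ((a : ℂ) + (y : ℂ) * Complex.I)) = 0 := by
    intro T
    have := Complex.integral_boundary_rect_eq_zero_of_differentiableOn f
      (⟨a, -T⟩ : ℂ) (⟨b, T⟩ : ℂ) (by
        intro z hz
        refine (hd z ?_).differentiableWithinAt
        have := (Complex.mem_reProdIm.1 hz).1
        simp only [Set.uIcc_of_le hab] at this
        exact this.1)
    simpa using this
  have h := (((hhor (-1) (by norm_num)).sub (hhor 1 (by norm_num))).add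
    ((hlim b ⟨hab, le_rfl⟩).const_mul Complex.I)).sub ((hlim a ⟨le_rfl, hab⟩).const_mul Complex.I)
  have h0 := tendsto_nhds_unique (h.congr hrect) tendsto_const_nhds
  have h1 : Complex.I * ((∫ y : ℝ, f ((b : ℂ) + (y : ℂ) * Complex.I)) -
      ∫ y : ℝ, f ((a : ℂ) + (y : ℂ) * Complex.I)) = 0 := by
    rw [← h0]; ring
  rcases mul_eq_zero.1 h1 with h2 | h2
  · exact absurd h2 Complex.I_ne_zero
  · exact (sub_eq_zero.1 h2).symm

theorem integral_Gamma_pow_eq (n : ℕ) (hn : 1 ≤ n) (L : ℝ) {a b : ℝ} (ha : 0 < a) (hab : a ≤ b) :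
    ∫ y : ℝ, Complex.Gamma ((a : ℂ) + (y : ℂ) * Complex.I) ^ n *
        Complex.exp (((a : ℂ) + (y : ℂ) * Complex.I) * L) =
      ∫ y : ℝ, Complex.Gamma ((b : ℂ) + (y : ℂ) * Complex.I) ^ n *
        Complex.exp (((b : ℂ) + (y : ℂ) * Complex.I) * L) := by
  obtain ⟨M, hM0, hM⟩ := exists_norm_Gamma_le (b := b) ha
  refine integral_vertical_eq (f := fun z => Complex.Gamma z ^ n * Complex.exp (z * L))
    (M := M ^ n * Real.exp (b * |L|)) hab (fun z hz => ?_) (fun x hx y => ?_)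
  · exact ((differentiableAt_Gamma (ha.trans_le hz)).pow n).mul (by fun_prop)
  · have hx0 : 0 < x := ha.trans_le hx.1
    have hexp : ‖Complex.exp (((x : ℂ) + (y : ℂ) * Complex.I) * L)‖ ≤ Real.exp (b * |L|) := by
      rw [Complex.norm_exp, Real.exp_le_exp]
      simp only [Complex.mul_re, Complex.add_re, Complex.ofReal_re, Complex.I_re, mul_zero,
        Complex.ofReal_im, Complex.I_im, mul_one, sub_self, add_zero, sub_zero]
      calc x * L ≤ x * |L| := by gcongr; exact le_abs_self L
        _ ≤ b * |L| := by gcongr; exact hx.2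
    have hy : (1 + y ^ 2)⁻¹ ≤ 1 := inv_le_one_of_one_le₀ (by nlinarith [sq_nonneg y])
    rw [norm_mul, norm_pow]
    calc ‖Complex.Gamma ((x : ℂ) + (y : ℂ) * Complex.I)‖ ^ n *
          ‖Complex.exp (((x : ℂ) + (y : ℂ) * Complex.I) * L)‖
        ≤ (M * (1 + y ^ 2)⁻¹) ^ n * Real.exp (b * |L|) := by
          gcongr; exact hM x hx y
      _ ≤ (M ^ n * (1 + y ^ 2)⁻¹) * Real.exp (b * |L|) := by
          rw [mul_pow]
          gcongr
          exact pow_le_of_le_one (by positivity) hy (by omega)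
      _ = _ := by ring

theorem one_add_mul_I_ne_zero (u : ℝ) : (1 : ℂ) + (u : ℂ) * Complex.I ≠ 0 := fun h => by
  have := congrArg Complex.re h
  simp at this

/-- Shift of the contour to `Re λ = 1 / L` followed by the rescaling `λ = (1 + iu) / L`. -/
theorem integral_eq_scaled (n : ℕ) (hn : 1 ≤ n) {ε L : ℝ} (hε : 0 < ε) (hL : 0 < L) :
    ∫ s : ℝ, Complex.Gamma ((ε : ℂ) + (s : ℂ) * Complex.I) ^ n *
        Complex.exp (((ε : ℂ) + (s : ℂ) * Complex.I) * L) =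
      (L : ℂ) ^ (n - 1) * ∫ u : ℝ, Complex.Gamma (1 + (1 + (u : ℂ) * Complex.I) / L) ^ n *
        (Complex.exp (1 + (u : ℂ) * Complex.I) / (1 + (u : ℂ) * Complex.I) ^ n) := by
  have hLi : 0 < L⁻¹ := inv_pos.2 hL
  have hL0 : (L : ℂ) ≠ 0 := Complex.ofReal_ne_zero.2 hL.ne'
  have hshift : ∫ s : ℝ, Complex.Gamma ((ε : ℂ) + (s : ℂ) * Complex.I) ^ n *
        Complex.exp (((ε : ℂ) + (s : ℂ) * Complex.I) * L) =
      ∫ s : ℝ, Complex.Gamma (((L⁻¹ : ℝ) : ℂ) + (s : ℂ) * Complex.I) ^ n *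
        Complex.exp ((((L⁻¹ : ℝ) : ℂ) + (s : ℂ) * Complex.I) * L) := by
    rcases le_total ε L⁻¹ with h | h
    · exact integral_Gamma_pow_eq n hn L hε h
    · exact (integral_Gamma_pow_eq n hn L hLi h).symm
  rw [hshift]
  have hsub := Measure.integral_comp_mul_left (fun s : ℝ =>
    Complex.Gamma (((L⁻¹ : ℝ) : ℂ) + (s : ℂ) * Complex.I) ^ n *
        Complex.exp ((((L⁻¹ : ℝ) : ℂ) + (s : ℂ) * Complex.I) * L)) L⁻¹
  rw [inv_inv, abs_of_pos hL] at hsub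
  have hpt : ∀ u : ℝ, Complex.Gamma (((L⁻¹ : ℝ) : ℂ) + ((L⁻¹ * u : ℝ) : ℂ) * Complex.I) ^ n *
        Complex.exp ((((L⁻¹ : ℝ) : ℂ) + ((L⁻¹ * u : ℝ) : ℂ) * Complex.I) * L) =
      (L : ℂ) ^ n * (Complex.Gamma (1 + (1 + (u : ℂ) * Complex.I) / L) ^ n *
        (Complex.exp (1 + (u : ℂ) * Complex.I) / (1 + (u : ℂ) * Complex.I) ^ n)) := by
    intro u
    have hw := one_add_mul_I_ne_zero u
    set w : ℂ := 1 + (u : ℂ) * Complex.I with hwdef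
    have e1 : ((L⁻¹ : ℝ) : ℂ) + ((L⁻¹ * u : ℝ) : ℂ) * Complex.I = w / L := by
      rw [hwdef]; push_cast; field_simp
    rw [e1, div_mul_cancel₀ _ hL0, add_comm 1 (w / L),
      Complex.Gamma_add_one _ (div_ne_zero hw hL0), mul_pow, div_pow]
    field_simp
  simp_rw [hpt, integral_const_mul] at hsub
  obtain ⟨k, rfl⟩ : ∃ k, n = k + 1 := ⟨n - 1, by omega⟩
  rw [Complex.real_smul, pow_succ'] at hsub
  rw [Nat.add_sub_cancel]
  refine mul_left_cancel₀ hL0 ?_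
  rw [← hsub]; ring

/-! ### The limit of the rescaled integral -/

theorem norm_one_add_sq (u : ℝ) : ‖(1 : ℂ) + (u : ℂ) * Complex.I‖ ^ 2 = 1 + u ^ 2 := by
  rw [← Complex.normSq_eq_norm_sq, Complex.normSq_apply]
  simp [sq]

theorem norm_kernel_le (n : ℕ) (hn : 2 ≤ n) (u : ℝ) :
    ‖Complex.exp (1 + (u : ℂ) * Complex.I) / (1 + (u : ℂ) * Complex.I) ^ n‖ ≤
      Real.exp 1 * (1 + u ^ 2)⁻¹ := by
  rw [norm_div, norm_pow, Complex.norm_exp, ← div_eq_mul_inv, ← norm_one_add_sq]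
  have h1 : 1 ≤ ‖(1 : ℂ) + (u : ℂ) * Complex.I‖ := by
    have := Complex.abs_re_le_norm ((1 : ℂ) + (u : ℂ) * Complex.I)
    simpa using this
  have h2 : ((1 : ℂ) + (u : ℂ) * Complex.I).re = 1 := by simp
  rw [h2]
  gcongr

theorem continuous_kernel (n : ℕ) : Continuous fun u : ℝ =>
    Complex.exp (1 + (u : ℂ) * Complex.I) / (1 + (u : ℂ) * Complex.I) ^ n :=
  Continuous.div (by fun_prop) (by fun_prop) fun u => pow_ne_zero _ (one_add_mul_I_ne_zero u)

theorem tendsto_scaled (n : ℕ) (hn : 2 ≤ n) :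
    Tendsto (fun L : ℝ => ∫ u : ℝ, Complex.Gamma (1 + (1 + (u : ℂ) * Complex.I) / L) ^ n *
        (Complex.exp (1 + (u : ℂ) * Complex.I) / (1 + (u : ℂ) * Complex.I) ^ n)) atTop
      (𝓝 (∫ u : ℝ, Complex.exp (1 + (u : ℂ) * Complex.I) / (1 + (u : ℂ) * Complex.I) ^ n)) := by
  have hre : ∀ (L u : ℝ), (1 + (1 + (u : ℂ) * Complex.I) / L).re = 1 + 1 / L := by
    intro L u; simp [Complex.div_ofReal_re]
  refine tendsto_integral_filter_of_dominated_convergence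
    (fun u => Real.exp 1 * (1 + u ^ 2)⁻¹) ?_ ?_ (integrable_inv_one_add_sq.const_mul _) ?_
  · filter_upwards [eventually_ge_atTop 1] with L hL
    have hL0 : 0 < L := by linarith
    refine Continuous.aestronglyMeasurable (Continuous.mul (Continuous.pow ?_ n)
      (continuous_kernel n))
    refine continuous_iff_continuousAt.2 fun u => ?_
    refine ContinuousAt.comp (f := fun u : ℝ => 1 + (1 + (u : ℂ) * Complex.I) / L) ?_ (by fun_prop)
    exact (differentiableAt_Gamma (by rw [hre]; positivity)).continuousAt
  · filter_upwards [eventually_ge_atTop 1] with L hL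
    refine .of_forall fun u => ?_
    have hL0 : 0 < L := by linarith
    have hL1 : 1 / L ≤ 1 := (div_le_one hL0).2 hL
    have hL2 : 0 < 1 / L := by positivity
    have hG : ‖Complex.Gamma (1 + (1 + (u : ℂ) * Complex.I) / L)‖ ≤ 1 := by
      refine (norm_Gamma_le (by rw [hre]; positivity)).trans ?_
      rw [hre]
      exact Gamma_le_one (by linarith) (by linarith)
    rw [norm_mul, norm_pow]
    calc _ ≤ 1 * (Real.exp 1 * (1 + u ^ 2)⁻¹) :=
          mul_le_mul (pow_le_one₀ (norm_nonneg _) hG) (norm_kernel_le n hn u)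
            (norm_nonneg _) zero_le_one
      _ = _ := one_mul _
  · refine .of_forall fun u => ?_
    have h1 : Tendsto (fun L : ℝ => (1 : ℂ) + (1 + (u : ℂ) * Complex.I) / L) atTop (𝓝 1) := by
      have h2 : Tendsto (fun L : ℝ => ((L⁻¹ : ℝ) : ℂ)) atTop (𝓝 ((0 : ℝ) : ℂ)) :=
        (Complex.continuous_ofReal.tendsto 0).comp tendsto_inv_atTop_zero
      have h3 := (h2.const_mul (1 + (u : ℂ) * Complex.I)).const_add 1
      simpa [div_eq_mul_inv] using h3
    have h2 := (Complex.continuousAt_Gamma_one.tendsto.comp h1).pow n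
    rw [Complex.Gamma_one, one_pow] at h2
    simpa using h2.mul_const
      (Complex.exp (1 + (u : ℂ) * Complex.I) / (1 + (u : ℂ) * Complex.I) ^ n)

/-! ### The value of the limiting integral -/

theorem integrableOn_pow_mul_exp (m : ℕ) {z : ℂ} (hz : 0 < z.re) :
    IntegrableOn (fun t : ℝ => (t : ℂ) ^ m * Complex.exp (-(z * t))) (Set.Ioi 0) := by
  have h := integrableOn_rpow_mul_exp_neg_mul_rpow (p := 1) (s := m) (b := z.re)
    (by have : (0 : ℝ) ≤ m := m.cast_nonneg
        linarith) one_pos hz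
  refine h.mono' (Continuous.aestronglyMeasurable (by fun_prop)) ?_
  refine (ae_restrict_iff' measurableSet_Ioi).2 (.of_forall fun t ht => ?_)
  have ht' : (0 : ℝ) < t := ht
  rw [norm_mul, norm_pow, Complex.norm_exp, Complex.norm_real, Real.norm_eq_abs, abs_of_pos ht']
  simp

/-- The Laplace transform of `t ^ m` at a complex argument, by integration by parts. -/
theorem integral_pow_mul_exp (m : ℕ) {z : ℂ} (hz : 0 < z.re) :
    ∫ t : ℝ in Set.Ioi 0, (t : ℂ) ^ m * Complex.exp (-(z * t)) = (m.factorial : ℂ) / z ^ (m + 1) := by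
  have hz0 : z ≠ 0 := fun h => by simp [h] at hz
  have hderiv_exp : ∀ t : ℝ, HasDerivAt (fun t : ℝ => Complex.exp (-(z * t)))
      (Complex.exp (-(z * t)) * (-z)) t := by
    intro t
    have h : HasDerivAt (fun w : ℂ => -(z * w)) (-z) (t : ℂ) := by
      have h0 := ((hasDerivAt_id (t : ℂ)).const_mul z).neg
      rw [mul_one] at h0
      exact h0
    exact h.cexp.comp_ofReal
  have hlim : ∀ m : ℕ, Tendsto (fun t : ℝ => (t : ℂ) ^ m * Complex.exp (-(z * t))) atTop (𝓝 0) := by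
    intro m
    rw [tendsto_zero_iff_norm_tendsto_zero]
    have h := tendsto_rpow_mul_exp_neg_mul_atTop_nhds_zero m z.re hz
    refine h.congr' ?_
    filter_upwards [eventually_gt_atTop 0] with t ht
    rw [norm_mul, norm_pow, Complex.norm_exp, Complex.norm_real, Real.norm_eq_abs, abs_of_pos ht]
    simp
  induction m with
  | zero =>
    have h := integral_Ioi_of_hasDerivAt_of_tendsto' (a := (0 : ℝ))
      (fun t _ => hderiv_exp t)
      (by
        have h0 := integrableOn_pow_mul_exp 0 hz
        simp only [pow_zero, one_mul] at h0
        exact h0.mul_const (-z))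
      (by simpa using hlim 0)
    rw [integral_mul_const] at h
    simp only [pow_zero, one_mul, Nat.factorial_zero, Nat.cast_one, zero_add, pow_one]
    rw [eq_div_iff hz0]
    simp at h
    exact h
  | succ m ih =>
    have h1 := integrableOn_pow_mul_exp m hz
    have h2 := integrableOn_pow_mul_exp (m + 1) hz
    have hd : ∀ t : ℝ, HasDerivAt (fun t : ℝ => (t : ℂ) ^ (m + 1) * Complex.exp (-(z * t)))
        (((m : ℂ) + 1) * ((t : ℂ) ^ m * Complex.exp (-(z * t))) -
          z * ((t : ℂ) ^ (m + 1) * Complex.exp (-(z * t)))) t := by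
      intro t
      have hp : HasDerivAt (fun t : ℝ => (t : ℂ) ^ (m + 1)) (((m : ℂ) + 1) * (t : ℂ) ^ m) t := by
        simpa using (hasDerivAt_pow (m + 1) (t : ℂ)).comp_ofReal
      exact (hp.mul (hderiv_exp t)).congr_deriv (by ring)
    have h := integral_Ioi_of_hasDerivAt_of_tendsto' (a := (0 : ℝ)) (fun t _ => hd t)
      ((h1.const_mul _).sub (h2.const_mul _)) (hlim (m + 1))
    rw [integral_sub (h1.const_mul _) (h2.const_mul _), integral_const_mul, integral_const_mul,
      ih] at h
    have h' : z * ∫ t : ℝ in Set.Ioi 0, (t : ℂ) ^ (m + 1) * Complex.exp (-(z * t)) =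
        ((m : ℂ) + 1) * ((m.factorial : ℂ) / z ^ (m + 1)) := by
      simp at h
      linear_combination -h
    refine mul_left_cancel₀ hz0 (h'.trans ?_)
    rw [Nat.factorial_succ]
    push_cast
    rw [← mul_div_assoc, ← mul_div_assoc, div_eq_div_iff (pow_ne_zero _ hz0) (pow_ne_zero _ hz0)]
    ring

/-- The reciprocal Gamma integral, obtained by Fourier inversion of `t ^ m * exp (-t)` at `t = 1`. -/
theorem integral_kernel (m : ℕ) (hm : 1 ≤ m) :
    ∫ u : ℝ, Complex.exp (1 + (u : ℂ) * Complex.I) / (1 + (u : ℂ) * Complex.I) ^ (m + 1) =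
      2 * π / (m.factorial : ℂ) := by
  set g : ℝ → ℂ := (Set.Ioi 0).indicator
    (fun t : ℝ => (t : ℂ) ^ m * Complex.exp (-((1 : ℂ) * t))) with hg
  have hgi : Integrable g :=
    (integrable_indicator_iff measurableSet_Ioi).2 (integrableOn_pow_mul_exp m (by simp))
  have hF : ∀ w : ℝ, 𝓕 g w =
      (m.factorial : ℂ) / (1 + ((2 * π * w : ℝ) : ℂ) * Complex.I) ^ (m + 1) := by
    intro w
    rw [Real.fourier_real_eq_integral_exp_smul,
      ← integral_pow_mul_exp m (z := 1 + ((2 * π * w : ℝ) : ℂ) * Complex.I) (by simp),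
      ← integral_indicator measurableSet_Ioi]
    congr 1
    ext t
    rw [hg]
    by_cases ht : t ∈ Set.Ioi (0 : ℝ)
    · rw [Set.indicator_of_mem ht, Set.indicator_of_mem ht, smul_eq_mul, mul_left_comm,
        ← Complex.exp_add]
      congr 2
      push_cast; ring
    · rw [Set.indicator_of_notMem ht, Set.indicator_of_notMem ht, smul_zero]
  have hFi : Integrable (𝓕 g) := by
    have h1 : Integrable fun u : ℝ => (m.factorial : ℂ) / (1 + (u : ℂ) * Complex.I) ^ (m + 1) := by
      refine (integrable_inv_one_add_sq.const_mul (m.factorial : ℝ)).mono'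
        (Continuous.aestronglyMeasurable (Continuous.div (by fun_prop) (by fun_prop)
          fun u => pow_ne_zero _ (one_add_mul_I_ne_zero u))) (.of_forall fun u => ?_)
      have h := norm_kernel_le (m + 1) (by omega) u
      rw [norm_div, Complex.norm_exp] at h
      have h2 : ((1 : ℂ) + (u : ℂ) * Complex.I).re = 1 := by simp
      rw [h2, div_eq_mul_inv] at h
      rw [norm_div, Complex.norm_natCast, div_eq_mul_inv]
      have := le_of_mul_le_mul_left h (Real.exp_pos 1)
      gcongr
    have h2 := h1.comp_mul_left' (R := 2 * π) (by positivity)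
    exact h2.congr (.of_forall fun w => (hF w).symm)
  have hcont : ContinuousAt g 1 := by
    have h : (fun t : ℝ => (t : ℂ) ^ m * Complex.exp (-((1 : ℂ) * t))) =ᶠ[𝓝 1] g := by
      filter_upwards [Ioi_mem_nhds (zero_lt_one' ℝ)] with t ht
      rw [hg, Set.indicator_of_mem ht]
    exact ContinuousAt.congr (by fun_prop) h
  have hinv := hgi.fourierInv_fourier_eq hFi hcont
  rw [Real.fourierInv_eq'] at hinv
  have hg1 : g 1 = Complex.exp (-1) := by
    rw [hg, Set.indicator_of_mem (by simp)]; simp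
  rw [hg1] at hinv
  have hsub := Measure.integral_comp_mul_left (fun u : ℝ =>
    Complex.exp (1 + (u : ℂ) * Complex.I) / (1 + (u : ℂ) * Complex.I) ^ (m + 1)) (2 * π)
  have hpt : ∀ w : ℝ, Complex.exp (1 + ((2 * π * w : ℝ) : ℂ) * Complex.I) /
        (1 + ((2 * π * w : ℝ) : ℂ) * Complex.I) ^ (m + 1) =
      (Complex.exp 1 / (m.factorial : ℂ)) *
        (Complex.exp (((2 * π * inner ℝ w (1 : ℝ) : ℝ) : ℂ) * Complex.I) • 𝓕 g w) := by
    intro w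
    have hf : (m.factorial : ℂ) ≠ 0 := Nat.cast_ne_zero.2 m.factorial_ne_zero
    have hw := one_add_mul_I_ne_zero (2 * π * w)
    rw [hF, Complex.exp_add, smul_eq_mul]
    have : inner ℝ w (1 : ℝ) = w := by simp
    rw [this]
    field_simp
  simp_rw [hpt] at hsub
  rw [integral_const_mul, hinv, abs_of_pos (by positivity), Complex.real_smul] at hsub
  have hpi : (π : ℂ) ≠ 0 := Complex.ofReal_ne_zero.2 Real.pi_ne_zero
  have hee : Complex.exp 1 * Complex.exp (-1) = 1 := by rw [← Complex.exp_add]; simp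
  rw [div_mul_eq_mul_div, hee] at hsub
  push_cast at hsub
  refine (mul_left_cancel₀ (inv_ne_zero (mul_ne_zero two_ne_zero hpi)) (hsub.symm.trans ?_))
  field_simp

/-! ### The case `n = 1` -/

/-- For `n = 1` the Mellin–Barnes integral is the inverse Mellin transform of `Γ`. -/
theorem integral_Gamma_eq_exp {ε q : ℝ} (hε : 0 < ε) (hq : 0 < q) :
    (1 / (2 * (π : ℂ))) * ∫ s : ℝ, Complex.Gamma ((ε : ℂ) + (s : ℂ) * Complex.I) ^ 1 *
      Complex.exp (-((ε : ℂ) + (s : ℂ) * Complex.I) * (Real.log q : ℂ)) = Complex.exp (-q) := by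
  set f : ℝ → ℂ := fun t => Complex.exp (-t) with hf
  have hmel : ∀ s : ℂ, 0 < s.re → mellin f s = Complex.Gamma s := by
    intro s hs
    rw [Complex.Gamma_eq_integral hs, Complex.GammaIntegral_eq_mellin]
    simp [hf]
  have hconv : MellinConvergent f ε := by
    have h := Complex.GammaIntegral_convergent (s := (ε : ℂ)) (by simpa using hε)
    refine h.congr (.of_forall fun t => ?_)
    simp [hf, mul_comm]
  have hline : ∀ y : ℝ, mellin f ((ε : ℂ) + (y : ℂ) * Complex.I) =
      Complex.Gamma ((ε : ℂ) + (y : ℂ) * Complex.I) := fun y => hmel _ (by simpa using hε)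
  have hvert : Complex.VerticalIntegrable (mellin f) ε := by
    obtain ⟨M, -, hM⟩ := exists_norm_Gamma_le (b := ε) hε
    have h : Integrable fun y : ℝ => Complex.Gamma ((ε : ℂ) + (y : ℂ) * Complex.I) := by
      refine (integrable_inv_one_add_sq.const_mul M).mono' ?_
        (.of_forall (hM ε ⟨le_rfl, le_rfl⟩))
      refine Continuous.aestronglyMeasurable (continuous_iff_continuousAt.2 fun y => ?_)
      refine ContinuousAt.comp (f := fun y : ℝ => (ε : ℂ) + (y : ℂ) * Complex.I) ?_ (by fun_prop)
      exact (differentiableAt_Gamma (by simpa using hε)).continuousAt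
    exact h.congr (.of_forall fun y => (hline y).symm)
  have hinv := mellinInv_mellin_eq ε f hq hconv hvert (by fun_prop)
  rw [mellinInv] at hinv
  simp_rw [hline] at hinv
  rw [show Complex.exp (-q) = f q from rfl, ← hinv, Complex.real_smul]
  congr 1
  · push_cast; rfl
  · congr 1
    ext y
    rw [Complex.cpow_def_of_ne_zero (Complex.ofReal_ne_zero.2 hq.ne'), ← Complex.ofReal_log hq.le,
      smul_eq_mul, pow_one, mul_comm, mul_comm (Real.log q : ℂ)]

end QuantumVolume

/-- Asymptotics of the quantum volume of `ℙ^{n−1}` as `𝗊 → 0⁺`: the Mellin–Barnes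
integral `F(𝗊) = (1/2π)∫_ℝ Γ(ε+is)ⁿ 𝗊^{−(ε+is)} ds` is asymptotic to the classical
symplectic volume `(−log 𝗊)^{n−1}/(n−1)!`. -/
theorem quantum_volume_asymptotics_at_zero (n : ℕ) (hn : 1 ≤ n) (ε : ℝ) (hε : 0 < ε)
    (F : ℝ → ℂ)
    (hF : ∀ q : ℝ, F q = (1 / (2 * (π : ℂ))) *
        ∫ s : ℝ, Complex.Gamma ((ε : ℂ) + (s : ℂ) * Complex.I) ^ n *
          Complex.exp (-((ε : ℂ) + (s : ℂ) * Complex.I) * (Real.log q : ℂ))) :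
    Tendsto (fun q : ℝ => F q * (Nat.factorial (n - 1) : ℂ) /
        ((Real.log (1 / q) : ℝ) : ℂ) ^ (n - 1))
      (nhdsWithin 0 (Set.Ioi 0)) (nhds 1) := by
  obtain ⟨k, rfl⟩ : ∃ k, n = k + 1 := ⟨n - 1, by omega⟩
  rw [Nat.add_sub_cancel]
  rcases Nat.eq_zero_or_pos k with rfl | hk
  · have h1 : Tendsto (fun q : ℝ => Complex.exp (-(q : ℂ))) (nhdsWithin 0 (Set.Ioi 0)) (nhds 1) := by
      have h : Continuous fun q : ℝ => Complex.exp (-(q : ℂ)) := by fun_prop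
      simpa using (h.tendsto 0).mono_left nhdsWithin_le_nhds
    refine h1.congr' ?_
    filter_upwards [self_mem_nhdsWithin] with q hq
    rw [hF q, zero_add, QuantumVolume.integral_Gamma_eq_exp hε hq]
    simp
  · have hL : Tendsto (fun q : ℝ => Real.log (1 / q)) (nhdsWithin 0 (Set.Ioi 0)) atTop := by
      simp only [one_div]
      exact Real.tendsto_log_atTop.comp tendsto_inv_nhdsGT_zero
    have hlim := (QuantumVolume.tendsto_scaled (k + 1) (by omega)).comp hL
    rw [QuantumVolume.integral_kernel k hk] at hlim
    have hf : (k.factorial : ℂ) ≠ 0 := Nat.cast_ne_zero.2 k.factorial_ne_zero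
    have hpi : (π : ℂ) ≠ 0 := Complex.ofReal_ne_zero.2 Real.pi_ne_zero
    have hlim' := hlim.const_mul ((k.factorial : ℂ) / (2 * π))
    have hone : (k.factorial : ℂ) / (2 * π) * (2 * π / (k.factorial : ℂ)) = 1 := by field_simp
    rw [hone] at hlim'
    refine hlim'.congr' ?_
    filter_upwards [hL.eventually_gt_atTop 0] with q hq
    have hL0 : ((Real.log (1 / q) : ℝ) : ℂ) ≠ 0 := Complex.ofReal_ne_zero.2 hq.ne'
    have hint : ∀ s : ℝ, -((ε : ℂ) + (s : ℂ) * Complex.I) * (Real.log q : ℂ) =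
        ((ε : ℂ) + (s : ℂ) * Complex.I) * ((Real.log (1 / q) : ℝ) : ℂ) := by
      intro s
      rw [one_div, Real.log_inv]; push_cast; ring
    rw [hF q]
    simp_rw [hint]
    rw [QuantumVolume.integral_eq_scaled (k + 1) (by omega) hε hq, Nat.add_sub_cancel,
      Function.comp_apply]
    generalize (∫ u : ℝ, Complex.Gamma (1 + (1 + (u : ℂ) * Complex.I) /
      ((Real.log (1 / q) : ℝ) : ℂ)) ^ (k + 1) * (Complex.exp (1 + (u : ℂ) * Complex.I) /
        (1 + (u : ℂ) * Complex.I) ^ (k + 1))) = J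
    field_simp
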